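/- arXiv:2408.06934 — 2 statements merged into one kernel-verified Lean document; each statement's English description precedes it below -/
import Mathlib

section
/- Let H be a complex Hilbert space, let A : H → H be a bounded linear operator with ‖A‖ < 1, let N ≥ 1 be an integer, let {g_j}_{j∈ℕ} be a Bessel sequence in H, let w : ℤ → H be an N-periodic sequence, let x : ℕ → H satisfy x(n+1) = A x(n) + w(n) for all n ≥ 0, and let x_p be the unique N-periodic solution. Then the sample matrix D = [⟨x(n), g_j⟩]_{n≥0, j∈ℕ} belongs to M_N; that is, every row r_n = (⟨x(n), g_j⟩)_{j∈ℕ} lies in ℓ²(ℕ), sup_{n≥0} ‖r_n‖_{ℓ²} < ∞, and for each s = 0, …, N−1 the rows r_{Nk+s} converge in ℓ²(ℕ), as k → ∞, to the sequence (⟨x_p(s), g_j⟩)_{j∈ℕ}. -/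
open Complex Filter Topology
open scoped InnerProductSpace ENNReal

noncomputable section

/-- `g` is a Bessel sequence in `H`. -/
def IsBessel {H : Type*} [NormedAddCommGroup H] [InnerProductSpace ℂ H] (g : ℕ → H) : Prop :=
  ∃ C : ℝ, 0 ≤ C ∧ ∀ v : H, Summable (fun j => ‖⟪v, g j⟫_ℂ‖ ^ 2) ∧
    ∑' j, ‖⟪v, g j⟫_ℂ‖ ^ 2 ≤ C * ‖v‖ ^ 2

/-!
Two orbits of the same sequence of `K`-Lipschitz maps, `K < 1`, approach each other geometrically.
Compared with the bounded `N`-periodic orbit `xp`, this makes the orbit `x` bounded and makes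
`x (N * k + s)` converge to `xp s` in norm. The Bessel inequality says that `v ↦ (⟪v, g j⟫)_j` is
bounded from the space to `ℓ²`, and so it carries both facts over to the rows of inner products.
-/

open scoped NNReal

section ContractiveOrbits

variable {α : Type*} [PseudoMetricSpace α] {K : ℝ≥0} {f : ℕ → α → α} {x y : ℕ → α}

theorem dist_orbits_le_pow_mul (hf : ∀ n, LipschitzWith K (f n))
    (hx : ∀ n, x (n + 1) = f n (x n)) (hy : ∀ n, y (n + 1) = f n (y n)) (n : ℕ) :
    dist (x n) (y n) ≤ K ^ n * dist (x 0) (y 0) := by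
  induction n with
  | zero => simp
  | succ n ih =>
    calc dist (x (n + 1)) (y (n + 1)) = dist (f n (x n)) (f n (y n)) := by rw [hx, hy]
      _ ≤ K * dist (x n) (y n) := (hf n).dist_le_mul _ _
      _ ≤ K * (K ^ n * dist (x 0) (y 0)) := by gcongr
      _ = K ^ (n + 1) * dist (x 0) (y 0) := by ring

theorem dist_orbits_le_dist_zero (hK : K ≤ 1) (hf : ∀ n, LipschitzWith K (f n))
    (hx : ∀ n, x (n + 1) = f n (x n)) (hy : ∀ n, y (n + 1) = f n (y n)) (n : ℕ) :
    dist (x n) (y n) ≤ dist (x 0) (y 0) :=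
  (dist_orbits_le_pow_mul hf hx hy n).trans <|
    mul_le_of_le_one_left dist_nonneg (pow_le_one₀ K.coe_nonneg hK)

theorem tendsto_dist_orbits_zero (hK : K < 1) (hf : ∀ n, LipschitzWith K (f n))
    (hx : ∀ n, x (n + 1) = f n (x n)) (hy : ∀ n, y (n + 1) = f n (y n)) :
    Tendsto (fun n => dist (x n) (y n)) atTop (𝓝 0) := by
  have hpow : Tendsto (fun n : ℕ => (K : ℝ) ^ n * dist (x 0) (y 0)) atTop (𝓝 0) := by
    simpa using (tendsto_pow_atTop_nhds_zero_of_lt_one K.coe_nonneg hK).mul_const (dist (x 0) (y 0))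
  exact squeeze_zero (fun _ => dist_nonneg) (dist_orbits_le_pow_mul hf hx hy) hpow

end ContractiveOrbits

section PeriodicSequences

variable {α : Type*} {y : ℕ → α} {N : ℕ}

theorem finite_range_of_periodic (hN : 0 < N) (hy : Function.Periodic y N) :
    (Set.range y).Finite := by
  refine ((Set.finite_Iio N).image y).subset ?_
  rintro _ ⟨n, rfl⟩
  exact ⟨n % N, Nat.mod_lt n hN, hy.map_mod_nat n⟩

variable [PseudoMetricSpace α] {x : ℕ → α}

theorem isBounded_range_of_dist_periodic_le (hN : 0 < N) (hy : Function.Periodic y N) {r : ℝ}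
    (hxy : ∀ n, dist (x n) (y n) ≤ r) : Bornology.IsBounded (Set.range x) := by
  have hthick : Bornology.IsBounded (Metric.cthickening r (Set.range y)) :=
    (finite_range_of_periodic hN hy).isBounded.cthickening
  refine hthick.subset ?_
  rintro _ ⟨n, rfl⟩
  exact Metric.mem_cthickening_of_dist_le _ _ r _ ⟨n, rfl⟩ (hxy n)

theorem tendsto_mul_add_of_tendsto_dist_periodic (hN : 0 < N) (hy : Function.Periodic y N)
    (hxy : Tendsto (fun n => dist (x n) (y n)) atTop (𝓝 0)) (s : ℕ) :
    Tendsto (fun k => x (N * k + s)) atTop (𝓝 (y s)) := by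
  have hindex : Tendsto (fun k => N * k + s) atTop atTop :=
    (tendsto_add_atTop_nat s).comp (tendsto_id.const_mul_atTop' hN)
  have hperiod (k : ℕ) : y (N * k + s) = y s := by
    simpa [mul_comm, add_comm] using hy.nsmul k s
  rw [tendsto_iff_dist_tendsto_zero]
  simpa only [Function.comp_def, hperiod] using hxy.comp hindex

end PeriodicSequences

section Bessel

variable {𝕜 E ι : Type*} [RCLike 𝕜] [SeminormedAddCommGroup E] [InnerProductSpace 𝕜 E]

variable (𝕜) in
/-- `g` is a Bessel family with bound `C`. Summability is part of the definition because `∑'` of a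
non-summable family is `0`. -/
def HasBesselBound (g : ι → E) (C : ℝ≥0) : Prop :=
  ∀ v : E, Summable (fun j => ‖⟪v, g j⟫_𝕜‖ ^ 2) ∧ ∑' j, ‖⟪v, g j⟫_𝕜‖ ^ 2 ≤ C * ‖v‖ ^ 2

namespace HasBesselBound

variable {g : ι → E} {C : ℝ≥0}

theorem memℓp_inner (hg : HasBesselBound 𝕜 g C) (v : E) : Memℓp (fun j => ⟪v, g j⟫_𝕜) 2 :=
  memℓp_gen (by simpa using (hg v).1)

theorem exists_tsum_norm_inner_sq_le (hg : HasBesselBound 𝕜 g C) {S : Set E}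
    (hS : Bornology.IsBounded S) : ∃ B : ℝ, ∀ v ∈ S, ∑' j, ‖⟪v, g j⟫_𝕜‖ ^ 2 ≤ B := by
  obtain ⟨R, hR⟩ := hS.exists_norm_le
  refine ⟨C * R ^ 2, fun v hv => (hg v).2.trans ?_⟩
  gcongr
  exact hR v hv

theorem tendsto_tsum_norm_inner_sub_sq (hg : HasBesselBound 𝕜 g C) {β : Type*} {l : Filter β}
    {u : β → E} {v : E} (hu : Tendsto u l (𝓝 v)) :
    Tendsto (fun b => ∑' j, ‖⟪u b, g j⟫_𝕜 - ⟪v, g j⟫_𝕜‖ ^ 2) l (𝓝 0) := by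
  have hbound : Tendsto (fun b => C * ‖u b - v‖ ^ 2) l (𝓝 0) := by
    simpa using ((tendsto_iff_norm_sub_tendsto_zero.mp hu).pow 2).const_mul (C : ℝ)
  refine squeeze_zero (fun b => tsum_nonneg fun j => by positivity) (fun b => ?_) hbound
  simpa only [inner_sub_left] using (hg (u b - v)).2

end HasBesselBound

theorem stmt11_general {K : ℝ≥0} (hK : K < 1) {f : ℕ → E → E} (hf : ∀ n, LipschitzWith K (f n))
    {N : ℕ} (hN : 0 < N) {g : ι → E} {C : ℝ≥0} (hg : HasBesselBound 𝕜 g C)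
    {x : ℕ → E} (hx : ∀ n, x (n + 1) = f n (x n))
    {xp : ℕ → E} (hxp_per : Function.Periodic xp N) (hxp_rec : ∀ n, xp (n + 1) = f n (xp n)) :
    (∀ n, Memℓp (fun j => ⟪x n, g j⟫_𝕜) 2) ∧
    (∃ B : ℝ, ∀ n, ∑' j, ‖⟪x n, g j⟫_𝕜‖ ^ 2 ≤ B) ∧
    (∀ s, Memℓp (fun j => ⟪xp s, g j⟫_𝕜) 2 ∧
      Tendsto (fun k => ∑' j, ‖⟪x (N * k + s), g j⟫_𝕜 - ⟪xp s, g j⟫_𝕜‖ ^ 2) atTop (𝓝 0)) := by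
  have hbounded : Bornology.IsBounded (Set.range x) :=
    isBounded_range_of_dist_periodic_le hN hxp_per (dist_orbits_le_dist_zero hK.le hf hx hxp_rec)
  have hlim (s : ℕ) : Tendsto (fun k => x (N * k + s)) atTop (𝓝 (xp s)) :=
    tendsto_mul_add_of_tendsto_dist_periodic hN hxp_per
      (tendsto_dist_orbits_zero hK hf hx hxp_rec) s
  refine ⟨fun n => hg.memℓp_inner (x n), ?_, fun s =>
    ⟨hg.memℓp_inner (xp s), hg.tendsto_tsum_norm_inner_sub_sq (hlim s)⟩⟩
  simpa only [Set.forall_mem_range] using hg.exists_tsum_norm_inner_sq_le hbounded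

end Bessel

theorem stmt11 {H : Type*} [NormedAddCommGroup H] [InnerProductSpace ℂ H] [CompleteSpace H]
    (A : H →L[ℂ] H) (hA : ‖A‖ < 1) (N : ℕ) (hN : 1 ≤ N)
    (g : ℕ → H) (hg : IsBessel g)
    (w : ℤ → H) (hw : ∀ n : ℤ, w (n + N) = w n)
    (x : ℕ → H) (hx : ∀ n : ℕ, x (n + 1) = A (x n) + w (n : ℤ))
    (xp : ℤ → H) (hxp_per : ∀ n : ℤ, xp (n + N) = xp n)
    (hxp_rec : ∀ n : ℤ, xp (n + 1) = A (xp n) + w n) :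
    -- every row `r_n = (⟪x(n), g_j⟫)_j` lies in `ℓ²(ℕ)`,
    (∀ n : ℕ, Memℓp (fun j => ⟪x n, g j⟫_ℂ) 2) ∧
    -- the rows are uniformly bounded in `ℓ²` norm,
    (∃ C : ℝ, ∀ n : ℕ, ∑' j, ‖⟪x n, g j⟫_ℂ‖ ^ 2 ≤ C) ∧
    -- and for each `0 ≤ s ≤ N−1` the rows `r_{Nk+s}` converge in `ℓ²(ℕ)`, as `k → ∞`,
    -- to the (square-summable) sequence `(⟪x_p(s), g_j⟫)_j`:
    (∀ s : ℕ, s < N →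
      Memℓp (fun j => ⟪xp (s : ℤ), g j⟫_ℂ) 2 ∧
      Tendsto (fun k : ℕ => ∑' j, ‖⟪x (N * k + s), g j⟫_ℂ - ⟪xp (s : ℤ), g j⟫_ℂ‖ ^ 2)
        atTop (𝓝 0)) := by
  obtain ⟨C, hC, hbessel⟩ := hg
  obtain ⟨hmem, hbdd, hlim⟩ := stmt11_general (f := fun n v => A v + w n) (C := ⟨C, hC⟩)
    (xp := fun n => xp n) hA (fun n => by simpa using A.lipschitz.add (.const (w n))) hN
    hbessel hx (fun n => hxp_per n) (fun n => hxp_rec n)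
  exact ⟨hmem, hbdd, fun s _ => hlim s⟩
end
end

section
/- Let H be a complex separable Hilbert space, let N ≥ 1 be an integer, and for each s = 0, …, N−1 let {g^s_j}_{j∈ℕ} be a Bessel sequence in H with Bessel bound C_s. Then for every D = [d_{i,j}] ∈ M_N and each s = 0, …, N−1, the limit [Q(D)]_s := lim_{i→∞} ∑_{j∈ℕ} d_{Ni+s, j} · g^s_j exists in H (each series converging in H), and satisfies ‖[Q(D)]_s‖ ≤ √(C_s) · ‖D‖. In particular Q : M_N → H^N, Q(D) = ([Q(D)]_0, …, [Q(D)]_{N−1}), is a well-defined bounded linear operator with ‖Q(D)‖_{H^N} ≤ C ‖D‖ for a constant C depending only on C_0, …, C_{N−1} and N. -/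
open Complex Filter Topology
open scoped InnerProductSpace ENNReal

noncomputable section

/-- `ℓ²(ℕ)` over `ℂ`. -/
abbrev ellTwo : Type := lp (fun _ : ℕ => ℂ) 2

/-- The Banach space `B(ℓ², ℓ^∞)` of matrices all of whose rows lie in `ℓ²(ℕ)`,
with finite sup norm (i.e. bounded sequences of rows in `ℓ²(ℕ)` with the sup norm). -/
abbrev BSpace : Type := lp (fun _ : ℕ => ellTwo) ∞

/-- The subspace `M_N` of `B(ℓ², ℓ^∞)`: matrices whose rows `r_{Nk+s}` converge
in `ℓ²` as `k → ∞`, for each `0 ≤ s ≤ N−1`. -/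
def MN (N : ℕ) : Submodule ℂ BSpace where
  carrier := {D | ∀ s : ℕ, s < N →
    ∃ t : ellTwo, Tendsto (fun k : ℕ => (D : ∀ _ : ℕ, ellTwo) (N * k + s)) atTop (𝓝 t)}
  add_mem' := by
    intro a b ha hb s hs
    obtain ⟨ta, hta⟩ := ha s hs
    obtain ⟨tb, htb⟩ := hb s hs
    refine ⟨ta + tb, ?_⟩
    have := hta.add htb
    simpa [lp.coeFn_add] using this
  zero_mem' := by
    intro s hs
    exact ⟨0, by simp [lp.coeFn_zero]⟩
  smul_mem' := by
    intro c a ha s hs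
    obtain ⟨ta, hta⟩ := ha s hs
    refine ⟨c • ta, ?_⟩
    have := hta.const_smul c
    simpa [lp.coeFn_smul] using this

/-!
The analysis operator `v ↦ (⟪g_j, v⟫)_j` of a Bessel sequence with bound `C` maps `H` into `ℓ²` with
norm at most `√C`. Its adjoint sends the `j`-th unit vector to `g_j`, hence by continuity is the
synthesis operator `a ↦ ∑ j, a_j • g_j`, with unconditional convergence and the same norm bound. The
`s`-th component of `Q` is the synthesis operator of `g^s` applied to the `ℓ²`-limit of the rows
`r_{Nk+s}`, and the latter is a contraction `M_N → ℓ²`.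
-/

section Bessel

variable {𝕜 ι H : Type*} [RCLike 𝕜] [NormedAddCommGroup H] [InnerProductSpace 𝕜 H]

variable (𝕜) in
/-- `g` is a Bessel family with Bessel bound `C`. Summability is demanded separately because the
`tsum` of a non-summable family is `0`. -/
def IsBesselWith (g : ι → H) (C : ℝ) : Prop :=
  ∀ v : H, Summable (fun j => ‖inner 𝕜 v (g j)‖ ^ 2) ∧
    ∑' j, ‖inner 𝕜 v (g j)‖ ^ 2 ≤ C * ‖v‖ ^ 2

namespace IsBesselWith

variable {g : ι → H} {C : ℝ}

theorem memℓp_inner (hg : IsBesselWith 𝕜 g C) (v : H) : Memℓp (fun j => inner 𝕜 (g j) v) 2 :=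
  memℓp_gen <| by simpa [norm_inner_symm (g _) v] using (hg v).1

theorem norm_mk_inner_le (hg : IsBesselWith 𝕜 g C) (v : H) :
    ‖(⟨fun j => inner 𝕜 (g j) v, hg.memℓp_inner v⟩ : lp (fun _ : ι => 𝕜) 2)‖ ≤ √C * ‖v‖ := by
  set a : lp (fun _ : ι => 𝕜) 2 := ⟨fun j => inner 𝕜 (g j) v, hg.memℓp_inner v⟩
  have norm_sq_le : ‖a‖ ^ 2 ≤ C * ‖v‖ ^ 2 :=
    calc ‖a‖ ^ 2 = ∑' j, ‖inner 𝕜 (g j) v‖ ^ 2 := by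
          simpa using lp.norm_rpow_eq_tsum (p := 2) (by simp) a
      _ = ∑' j, ‖inner 𝕜 v (g j)‖ ^ 2 := by simp only [norm_inner_symm]
      _ ≤ C * ‖v‖ ^ 2 := (hg v).2
  calc ‖a‖ ≤ √(C * ‖v‖ ^ 2) := Real.le_sqrt_of_sq_le norm_sq_le
    _ = √C * ‖v‖ := by rw [Real.sqrt_mul' C (sq_nonneg _), Real.sqrt_sq (norm_nonneg v)]

/-- The analysis operator `v ↦ (⟪g j, v⟫)_j` of a Bessel family. -/
def analysis (hg : IsBesselWith 𝕜 g C) : H →L[𝕜] lp (fun _ : ι => 𝕜) 2 :=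
  LinearMap.mkContinuous
    { toFun v := ⟨fun j => inner 𝕜 (g j) v, hg.memℓp_inner v⟩
      map_add' v w := lp.ext <| funext fun j => inner_add_right (g j) v w
      map_smul' c v := lp.ext <| funext fun j => inner_smul_right (g j) v c }
    √C hg.norm_mk_inner_le

theorem analysis_apply (hg : IsBesselWith 𝕜 g C) (v : H) (j : ι) :
    hg.analysis v j = inner 𝕜 (g j) v :=
  rfl

theorem norm_analysis_le (hg : IsBesselWith 𝕜 g C) : ‖hg.analysis‖ ≤ √C :=
  LinearMap.mkContinuous_norm_le _ (Real.sqrt_nonneg C) _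

variable [CompleteSpace H]

/-- The synthesis operator `a ↦ ∑ j, a j • g j` of a Bessel family, encoded as the adjoint of the
analysis operator. -/
def synthesis (hg : IsBesselWith 𝕜 g C) : lp (fun _ : ι => 𝕜) 2 →L[𝕜] H :=
  ContinuousLinearMap.adjoint hg.analysis

theorem norm_synthesis_le (hg : IsBesselWith 𝕜 g C) : ‖hg.synthesis‖ ≤ √C :=
  (ContinuousLinearMap.adjoint.norm_map hg.analysis).trans_le hg.norm_analysis_le

theorem synthesis_single [DecidableEq ι] (hg : IsBesselWith 𝕜 g C) (j : ι) (c : 𝕜) :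
    hg.synthesis (lp.single 2 j c) = c • g j := by
  refine ext_inner_right 𝕜 fun v => ?_
  rw [synthesis, ContinuousLinearMap.adjoint_inner_left, lp.inner_single_left, analysis_apply,
    inner_smul_left, RCLike.inner_apply, mul_comm]

theorem hasSum_synthesis (hg : IsBesselWith 𝕜 g C) (a : lp (fun _ : ι => 𝕜) 2) :
    HasSum (fun j => a j • g j) (hg.synthesis a) := by
  classical
  simpa only [synthesis_single] using
    hg.synthesis.hasSum (lp.hasSum_single ENNReal.ofNat_ne_top a)

end IsBesselWith

end Bessel

namespace MN

variable {N : ℕ}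

theorem exists_tendsto_row (s : Fin N) (D : MN N) :
    ∃ t : ellTwo, Tendsto (fun k : ℕ => (D : BSpace) (N * k + s)) atTop (𝓝 t) :=
  D.2 s s.2

theorem norm_le_of_tendsto_row {s : Fin N} {D : MN N} {t : ellTwo}
    (ht : Tendsto (fun k : ℕ => (D : BSpace) (N * k + s)) atTop (𝓝 t)) : ‖t‖ ≤ ‖D‖ :=
  le_of_tendsto' ht.norm fun _ => lp.norm_apply_le_norm ENNReal.top_ne_zero (D : BSpace) _

/-- The operator `M_N → ℓ²` sending a matrix to the limit `t_s` of its rows `r_{Nk+s}`. -/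
def rowLimit (s : Fin N) : MN N →L[ℂ] ellTwo :=
  (linearMapOfTendsto (fun D : MN N => (exists_tendsto_row s D).choose)
    (fun k : ℕ => (lp.evalCLM ℂ (fun _ : ℕ => ellTwo) ∞ (N * k + s)).toLinearMap ∘ₗ (MN N).subtype)
    (tendsto_pi_nhds.2 fun D => (exists_tendsto_row s D).choose_spec)).mkContinuous 1 fun D =>
      (norm_le_of_tendsto_row (exists_tendsto_row s D).choose_spec).trans_eq (one_mul _).symm

theorem tendsto_rowLimit (s : Fin N) (D : MN N) :
    Tendsto (fun k : ℕ => (D : BSpace) (N * k + s)) atTop (𝓝 (rowLimit s D)) :=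
  (exists_tendsto_row s D).choose_spec

variable {H : Type*} [NormedAddCommGroup H] [InnerProductSpace ℂ H] [CompleteSpace H]
  {g : Fin N → ℕ → H} {C : Fin N → ℝ}

/-- The operator `Q : M_N → H^N` of Bessel sequences `g^0, …, g^{N-1}`: its `s`-th component is the
synthesis operator of `g^s` at the row limit `t_s`. -/
def limitSynthesis (hg : ∀ s, IsBesselWith ℂ (g s) (C s)) :
    MN N →L[ℂ] PiLp 2 (fun _ : Fin N => H) :=
  (PiLp.continuousLinearEquiv 2 ℂ (fun _ : Fin N => H)).symm.toContinuousLinearMap ∘L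
    ContinuousLinearMap.pi fun s => (hg s).synthesis ∘L rowLimit s

theorem limitSynthesis_apply (hg : ∀ s, IsBesselWith ℂ (g s) (C s)) (D : MN N) (s : Fin N) :
    limitSynthesis hg D s = (hg s).synthesis (rowLimit s D) :=
  rfl

theorem tendsto_tsum_limitSynthesis (hg : ∀ s, IsBesselWith ℂ (g s) (C s)) (D : MN N)
    (s : Fin N) :
    Tendsto (fun i : ℕ => ∑' j : ℕ, (D : BSpace) (N * i + s) j • g s j) atTop
      (𝓝 (limitSynthesis hg D s)) := by
  simpa only [limitSynthesis_apply, Function.comp_def, ((hg s).hasSum_synthesis _).tsum_eq] using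
    ((hg s).synthesis.continuous.tendsto _).comp (tendsto_rowLimit s D)

theorem norm_limitSynthesis_apply_le (hg : ∀ s, IsBesselWith ℂ (g s) (C s)) (D : MN N)
    (s : Fin N) : ‖limitSynthesis hg D s‖ ≤ √(C s) * ‖D‖ :=
  (hg s).synthesis.le_of_opNorm_le_of_le (hg s).norm_synthesis_le
    (norm_le_of_tendsto_row (tendsto_rowLimit s D))

theorem norm_limitSynthesis_le (hg : ∀ s, IsBesselWith ℂ (g s) (C s)) (hC : ∀ s, 0 ≤ C s)
    (D : MN N) : ‖limitSynthesis hg D‖ ≤ √(∑ s, C s) * ‖D‖ := by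
  have component_sq_le (s : Fin N) : ‖limitSynthesis hg D s‖ ^ 2 ≤ C s * ‖D‖ ^ 2 :=
    calc ‖limitSynthesis hg D s‖ ^ 2 ≤ (√(C s) * ‖D‖) ^ 2 := by
          gcongr
          exact norm_limitSynthesis_apply_le hg D s
      _ = C s * ‖D‖ ^ 2 := by rw [mul_pow, Real.sq_sqrt (hC s)]
  calc ‖limitSynthesis hg D‖ = √(∑ s, ‖limitSynthesis hg D s‖ ^ 2) := PiLp.norm_eq_of_L2 _
    _ ≤ √(∑ s, C s * ‖D‖ ^ 2) := by
        gcongr with s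
        exact component_sq_le s
    _ = √(∑ s, C s) * ‖D‖ := by
        rw [← Finset.sum_mul, Real.sqrt_mul' _ (sq_nonneg _), Real.sqrt_sq (norm_nonneg D)]

end MN

theorem stmt13_general {H : Type*} [NormedAddCommGroup H] [InnerProductSpace ℂ H]
    [CompleteSpace H] (N : ℕ) (g : Fin N → ℕ → H) (C : Fin N → ℝ) (hC : ∀ s, 0 ≤ C s)
    (hg : ∀ s, IsBesselWith ℂ (g s) (C s)) :
    (∀ D : MN N, ∀ s : Fin N,
      (∀ i : ℕ, Summable (fun j : ℕ => (D : BSpace) (N * i + s) j • g s j)) ∧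
      ∃ L : H,
        Tendsto (fun i : ℕ => ∑' j : ℕ, (D : BSpace) (N * i + s) j • g s j) atTop (𝓝 L) ∧
        ‖L‖ ≤ √(C s) * ‖(D : BSpace)‖) ∧
    ∃ Q : MN N →L[ℂ] PiLp 2 (fun _ : Fin N => H),
      (∀ D : MN N, ∀ s : Fin N,
        Tendsto (fun i : ℕ => ∑' j : ℕ, (D : BSpace) (N * i + s) j • g s j) atTop
          (𝓝 (Q D s))) ∧
      ∀ D : MN N, ‖Q D‖ ≤ √(∑ s, C s) * ‖(D : BSpace)‖ :=
  ⟨fun D s => ⟨fun _ => ((hg s).hasSum_synthesis _).summable, MN.limitSynthesis hg D s,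
      MN.tendsto_tsum_limitSynthesis hg D s, MN.norm_limitSynthesis_apply_le hg D s⟩,
    MN.limitSynthesis hg, MN.tendsto_tsum_limitSynthesis hg, MN.norm_limitSynthesis_le hg hC⟩

theorem stmt13 {H : Type*} [NormedAddCommGroup H] [InnerProductSpace ℂ H] [CompleteSpace H]
    [TopologicalSpace.SeparableSpace H]
    (N : ℕ) (hN : 1 ≤ N)
    (g : Fin N → ℕ → H) (C : Fin N → ℝ)
    -- for each `s`, `{g^s_j}_j` is a Bessel sequence with Bessel bound `C s`:
    (hg : ∀ s : Fin N, 0 ≤ C s ∧ ∀ v : H,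
      Summable (fun j => ‖⟪v, g s j⟫_ℂ‖ ^ 2) ∧ ∑' j, ‖⟪v, g s j⟫_ℂ‖ ^ 2 ≤ C s * ‖v‖ ^ 2) :
    -- each series converges and the limit over blocks exists, with the stated bound:
    (∀ D : MN N, ∀ s : Fin N,
      (∀ i : ℕ, Summable (fun j : ℕ =>
        (((D : BSpace) : ∀ _ : ℕ, ellTwo) (N * i + (s : ℕ)) j) • g s j)) ∧
      ∃ L : H,
        Tendsto (fun i : ℕ =>
            ∑' j : ℕ, (((D : BSpace) : ∀ _ : ℕ, ellTwo) (N * i + (s : ℕ)) j) • g s j)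
          atTop (𝓝 L) ∧
        ‖L‖ ≤ Real.sqrt (C s) * ‖(D : BSpace)‖) ∧
    -- in particular, `Q : M_N → H^N` is a well-defined bounded linear operator:
    ∃ Q : MN N →L[ℂ] PiLp 2 (fun _ : Fin N => H),
      (∀ D : MN N, ∀ s : Fin N,
        Tendsto (fun i : ℕ =>
            ∑' j : ℕ, (((D : BSpace) : ∀ _ : ℕ, ellTwo) (N * i + (s : ℕ)) j) • g s j)
          atTop (𝓝 (Q D s))) ∧
      ∃ C' : ℝ, 0 ≤ C' ∧ ∀ D : MN N, ‖Q D‖ ≤ C' * ‖(D : BSpace)‖ := by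
  obtain ⟨hlim, Q, hQ, hbound⟩ := stmt13_general N g C (fun s => (hg s).1) fun s => (hg s).2
  exact ⟨hlim, Q, hQ, √(∑ s, C s), Real.sqrt_nonneg _, hbound⟩
end
end
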